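/- arXiv:2112.06762 — 2 statements merged into one kernel-verified Lean document; each statement's English description precedes it below -/
import Mathlib

section
/- GRPL embeds in RPL: for every set T of graded formulas and every graded formula ⟨q, φ⟩, T ⊢_GRPL ⟨q, φ⟩ if and only if the set { r̄→ψ : ⟨r, ψ⟩ ∈ T } proves the formula q̄→φ in RPL. -/
/-- The rationals in the unit interval: indices of the truth constants of RPL,
and grades of graded formulas of GRPL. -/
abbrev UQ := {q : ℚ // 0 ≤ q ∧ q ≤ 1}

instance : Zero UQ := ⟨⟨0, by norm_num⟩⟩
instance : One UQ := ⟨⟨1, by norm_num⟩⟩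

/-- Łukasiewicz negation on the rational unit interval: `¬q = 1 - q`. -/
def UQ.lneg (q : UQ) : UQ :=
  ⟨1 - q.1, by obtain ⟨h0, h1⟩ := q.2; constructor <;> linarith⟩

/-- Łukasiewicz implication on the rational unit interval: `q → r = min 1 (1 - q + r)`. -/
def UQ.limp (q r : UQ) : UQ :=
  ⟨min 1 (1 - q.1 + r.1), by
    obtain ⟨hq0, hq1⟩ := q.2; obtain ⟨hr0, hr1⟩ := r.2
    exact ⟨le_min (by norm_num) (by linarith), min_le_left _ _⟩⟩

/-- Łukasiewicz strong conjunction on the rational unit interval: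
`q ⊙ r = max 0 (q + r - 1)`. -/
def UQ.lmul (q r : UQ) : UQ :=
  ⟨max 0 (q.1 + r.1 - 1), by
    obtain ⟨hq0, hq1⟩ := q.2; obtain ⟨hr0, hr1⟩ := r.2
    exact ⟨le_max_left _ _, max_le (by norm_num) (by linarith)⟩⟩

/-- Formulas of the language of RPL: propositional variables, a truth constant `q̄` for
each rational `q ∈ [0,1]`, negation and implication. -/
inductive Fml : Type
  | var : ℕ → Fml
  | const : UQ → Fml
  | neg : Fml → Fml
  | imp : Fml → Fml → Fml

/-- Strong conjunction, defined: `α ⊙ β := ¬(α → ¬β)`. -/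
def Fml.odot (a b : Fml) : Fml := Fml.neg (a.imp b.neg)

/-- (Min-)conjunction, defined: `α ∧ β := α ⊙ (α → β)`. -/
def Fml.conj (a b : Fml) : Fml := a.odot (a.imp b)

/-- Equivalence `α ≡ β`, the conjunction of the two implications. -/
def Fml.eqv (a b : Fml) : Fml := (a.imp b).conj (b.imp a)

/-- Instances of the axiom schemata (A1)-(A4) of Łukasiewicz logic Ł. -/
inductive IsLukAxiom : Fml → Prop
  | a1 (φ ψ : Fml) : IsLukAxiom (φ.imp (ψ.imp φ))
  | a2 (φ ψ χ : Fml) : IsLukAxiom ((φ.imp ψ).imp ((ψ.imp χ).imp (φ.imp χ)))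
  | a3 (φ ψ : Fml) : IsLukAxiom (((φ.imp ψ).imp ψ).imp ((ψ.imp φ).imp φ))
  | a4 (φ ψ : Fml) : IsLukAxiom ((φ.neg.imp ψ.neg).imp (ψ.imp φ))

/-- Axioms of Rational Pavelka logic RPL: the axioms of Ł together with the
bookkeeping axioms (with `1̄ ≡ 1` and `0̄ ≡ 0` rendered as the provability of `1̄`
and of `¬0̄`, since the basic language `{¬, →}` has no primitive truth constants). -/
inductive IsRPLAxiom : Fml → Prop
  | luk {φ : Fml} : IsLukAxiom φ → IsRPLAxiom φ
  | book_imp (q r : UQ) :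
      IsRPLAxiom (((Fml.const q).imp (Fml.const r)).eqv (Fml.const (q.limp r)))
  | book_neg (q : UQ) : IsRPLAxiom ((Fml.const q).neg.eqv (Fml.const q.lneg))
  | book_one : IsRPLAxiom (Fml.const 1)
  | book_zero : IsRPLAxiom (Fml.const 0).neg

/-- `L` is a proof in RPL from the theory `T`: every member of the list is an axiom of RPL,
a member of `T`, or follows from two earlier members by modus ponens. -/
def IsRPLProofFrom (T : Set Fml) (L : List Fml) : Prop :=
  ∀ i : Fin L.length, IsRPLAxiom (L.get i) ∨ L.get i ∈ T ∨
    ∃ j k : Fin L.length, j < i ∧ k < i ∧ L.get k = (L.get j).imp (L.get i)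

/-- `T ⊢_RPL φ`: some proof in RPL from `T` has `φ` as its last element. -/
def RPLProv (T : Set Fml) (φ : Fml) : Prop :=
  ∃ L : List Fml, IsRPLProofFrom T L ∧ L.getLast? = some φ

/-- The fuzzy set of axioms of GRPL: (A) instances of the axioms of Ł in grade 1;
(B) each constant `q̄` in grade `q`; (C) the bookkeeping axioms in grade 1;
(D) all formulas in grade 0. -/
inductive IsGRPLAxiom : UQ → Fml → Prop
  | luk {φ : Fml} : IsLukAxiom φ → IsGRPLAxiom 1 φ
  | const (q : UQ) : IsGRPLAxiom q (Fml.const q)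
  | book_neg (q : UQ) : IsGRPLAxiom 1 ((Fml.const q).neg.eqv (Fml.const q.lneg))
  | book_imp (q r : UQ) :
      IsGRPLAxiom 1 (((Fml.const q).imp (Fml.const r)).eqv (Fml.const (q.limp r)))
  | zero (φ : Fml) : IsGRPLAxiom 0 φ

/-- `L` is a graded proof in GRPL from the set `T` of graded formulas: every member is a
graded axiom of GRPL, a member of `T`, or follows from earlier members by graded modus
ponens (from `⟨q,φ⟩` and `⟨r,φ→ψ⟩` derive `⟨q⊙r,ψ⟩`) or by lifting (from `⟨q,φ⟩` derive
`⟨r→q, r̄→φ⟩`). -/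
def IsGRPLProofFrom (T : Set (UQ × Fml)) (L : List (UQ × Fml)) : Prop :=
  ∀ i : Fin L.length, IsGRPLAxiom (L.get i).1 (L.get i).2 ∨ L.get i ∈ T ∨
    (∃ j k : Fin L.length, j < i ∧ k < i ∧
      (L.get k).2 = (L.get j).2.imp (L.get i).2 ∧
      (L.get i).1 = UQ.lmul (L.get j).1 (L.get k).1) ∨
    (∃ j : Fin L.length, ∃ r : UQ, j < i ∧
      L.get i = (UQ.limp r (L.get j).1, (Fml.const r).imp (L.get j).2))

/-- `T ⊢_GRPL ⟨q,φ⟩`: some graded proof in GRPL from `T` has `⟨q,φ⟩` as its last element. -/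
def GRPLProv (T : Set (UQ × Fml)) (p : UQ × Fml) : Prop :=
  ∃ L : List (UQ × Fml), IsGRPLProofFrom T L ∧ L.getLast? = some p

/-- The set of graded hypotheses `⟨Γ(ψ), ψ⟩` determined by a fuzzy theory `Γ`. -/
def FuzzyThy (Γ : Fml → UQ) : Set (UQ × Fml) := {p | p.1 = Γ p.2}

/-- An assignment into the standard MV-algebra `[0,1]_Ł` takes values in `[0,1]`. -/
def IsAssignment (v : ℕ → ℝ) : Prop := ∀ n, v n ∈ Set.Icc (0 : ℝ) 1

/-- Evaluation of a formula in the standard MV-algebra `[0,1]_Ł`, with each rational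
constant interpreted canonically. -/
noncomputable def eval (v : ℕ → ℝ) : Fml → ℝ
  | Fml.var n => v n
  | Fml.const q => (q.1 : ℝ)
  | Fml.neg φ => 1 - eval v φ
  | Fml.imp φ ψ => min 1 (1 - eval v φ + eval v ψ)

/-!
The map `⟨r, ψ⟩ ↦ r̄ → ψ` turns each graded rule into a derivable rule of RPL: lifting becomes
bookkeeping for `→` combined with transitivity, and graded modus ponens follows from
`q̄ → (r̄ → ψ)` by residuation, once bookkeeping has given `(q ⊙ r)‾ → q̄ ⊙ r̄`. Conversely, the
formulas provable in grade `1` are closed under modus ponens because `1 ⊙ 1 = 1`, and `⟨q, φ⟩` is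
interderivable with `⟨1, q̄ → φ⟩`: lift by `q` in one direction, detach `⟨q, q̄⟩` in the other.
-/

section Deduction

variable {α : Type*} {C : Set α →o Set α} {L M : List α} {x : α}

/-- A deduction for a monotone one-step consequence operator `C`: a list each of whose members is
an immediate consequence of the earlier ones. Both `IsRPLProofFrom` and `IsGRPLProofFrom` are
instances of this notion. -/
def IsDeduction (C : Set α →o Set α) (L : List α) : Prop :=
  ∀ i : Fin L.length, L.get i ∈ C {x | x ∈ L.take i}

/-- `x` is deducible for `C` if it is the last member of some deduction for `C`. -/
def IsDeducible (C : Set α →o Set α) (x : α) : Prop :=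
  ∃ L, IsDeduction C L ∧ L.getLast? = some x

theorem mem_take_iff_exists_get {i : ℕ} :
    x ∈ L.take i ↔ ∃ j : Fin L.length, j < i ∧ L.get j = x := by
  rw [List.mem_take_iff_getElem]
  constructor
  · rintro ⟨j, hj, rfl⟩
    exact ⟨⟨j, hj.trans_le (min_le_right _ _)⟩, hj.trans_le (min_le_left _ _), rfl⟩
  · rintro ⟨j, hj, rfl⟩
    exact ⟨j, by omega, rfl⟩

theorem IsDeduction.append (hL : IsDeduction C L) (hM : IsDeduction C M) :
    IsDeduction C (L ++ M) := by
  rintro ⟨i, hi⟩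
  rw [List.length_append] at hi
  simp only [List.get_eq_getElem, List.take_append, List.mem_append]
  by_cases hiL : i < L.length
  · rw [List.getElem_append_left hiL]
    exact C.mono (fun _ => Or.inl) (hL ⟨i, hiL⟩)
  · rw [List.getElem_append_right (not_lt.mp hiL)]
    exact C.mono (fun _ => Or.inr) (hM ⟨i - L.length, by omega⟩)

theorem IsDeduction.concat (hL : IsDeduction C L) (hx : x ∈ C {y | y ∈ L}) :
    IsDeduction C (L ++ [x]) := by
  rintro ⟨i, hi⟩
  rw [List.length_append, List.length_singleton] at hi
  simp only [List.get_eq_getElem]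
  rcases Nat.lt_succ_iff_lt_or_eq.mp hi with hiL | rfl
  · rw [List.getElem_append_left hiL, List.take_append_of_le_length hiL.le]
    exact hL ⟨i, hiL⟩
  · simpa using hx

theorem IsDeduction.mem_of_map_subset {S : Set α} (hL : IsDeduction C L) (hS : C S ⊆ S)
    (hx : x ∈ L) : x ∈ S := by
  have get_mem (i : Fin L.length) : L.get i ∈ S := by
    induction i using WellFoundedLT.induction with
    | ind i ih =>
      refine hS (C.mono (fun y hy => ?_) (hL i))
      obtain ⟨j, hj, rfl⟩ := mem_take_iff_exists_get.mp hy
      exact ih j hj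
  obtain ⟨i, rfl⟩ := List.get_of_mem hx
  exact get_mem i

theorem IsDeduction.exists_of_finite {F : Set α} (hF : F.Finite)
    (h : ∀ y ∈ F, IsDeducible C y) : ∃ L, IsDeduction C L ∧ ∀ y ∈ F, y ∈ L := by
  induction F, hF using Set.Finite.induction_on with
  | empty => exact ⟨[], fun i => i.elim0, fun _ => False.elim⟩
  | insert _ _ ih =>
    obtain ⟨hy, hF⟩ := Set.forall_mem_insert.mp h
    obtain ⟨L, hL, hLy⟩ := hy
    obtain ⟨M, hM, hFM⟩ := ih hF
    exact ⟨L ++ M, hL.append hM, Set.forall_mem_insert.mpr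
      ⟨List.mem_append_left M (List.mem_of_getLast? hLy),
        fun z hz => List.mem_append_right L (hFM z hz)⟩⟩

namespace IsDeducible

theorem of_finite {F : Set α} (hF : F.Finite) (h : ∀ y ∈ F, IsDeducible C y) (hx : x ∈ C F) :
    IsDeducible C x := by
  obtain ⟨L, hL, hFL⟩ := IsDeduction.exists_of_finite hF h
  exact ⟨L ++ [x], hL.concat (C.mono hFL hx), by simp⟩

theorem mem_of_map_subset {S : Set α} (h : IsDeducible C x) (hS : C S ⊆ S) : x ∈ S := by
  obtain ⟨L, hL, hx⟩ := h
  exact hL.mem_of_map_subset hS (List.mem_of_getLast? hx)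

end IsDeducible

end Deduction

/-- The one-step consequence operator of RPL over the theory `T`. -/
def rplStep (T : Set Fml) : Set Fml →o Set Fml where
  toFun S := {φ | IsRPLAxiom φ ∨ φ ∈ T ∨ ∃ ψ ∈ S, ψ.imp φ ∈ S}
  monotone' _ _ hSS' _ :=
    Or.imp_right <| Or.imp_right fun ⟨ψ, hψ, hψφ⟩ => ⟨ψ, hSS' hψ, hSS' hψφ⟩

/-- The one-step consequence operator of GRPL over the set `T` of graded formulas. -/
def grplStep (T : Set (UQ × Fml)) : Set (UQ × Fml) →o Set (UQ × Fml) where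
  toFun S := {p | IsGRPLAxiom p.1 p.2 ∨ p ∈ T ∨
    (∃ a ∈ S, ∃ b ∈ S, b.2 = a.2.imp p.2 ∧ p.1 = a.1.lmul b.1) ∨
    ∃ a ∈ S, ∃ r : UQ, p = (r.limp a.1, (Fml.const r).imp a.2)}
  monotone' _ _ hSS' _ :=
    Or.imp_right <| Or.imp_right <| Or.imp
      (fun ⟨a, ha, b, hb, h⟩ => ⟨a, hSS' ha, b, hSS' hb, h⟩)
      (fun ⟨a, ha, h⟩ => ⟨a, hSS' ha, h⟩)

theorem rplProv_iff_isDeducible {T : Set Fml} {φ : Fml} :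
    RPLProv T φ ↔ IsDeducible (rplStep T) φ := by
  have isRPLProofFrom_iff (L : List Fml) : IsRPLProofFrom T L ↔ IsDeduction (rplStep T) L := by
    refine forall_congr' fun i => or_congr_right (or_congr_right ?_)
    simp only [Set.mem_ofPred_eq, mem_take_iff_exists_get]
    constructor
    · rintro ⟨j, k, hj, hk, h⟩
      exact ⟨_, ⟨j, hj, rfl⟩, k, hk, h⟩
    · rintro ⟨_, ⟨j, hj, rfl⟩, k, hk, h⟩
      exact ⟨j, k, hj, hk, h⟩
  simp only [RPLProv, IsDeducible, isRPLProofFrom_iff]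

theorem grplProv_iff_isDeducible {T : Set (UQ × Fml)} {p : UQ × Fml} :
    GRPLProv T p ↔ IsDeducible (grplStep T) p := by
  have isGRPLProofFrom_iff (L : List (UQ × Fml)) :
      IsGRPLProofFrom T L ↔ IsDeduction (grplStep T) L := by
    refine forall_congr' fun i => or_congr_right (or_congr_right (or_congr ?_ ?_))
    · simp only [Set.mem_ofPred_eq, mem_take_iff_exists_get]
      constructor
      · rintro ⟨j, k, hj, hk, h⟩
        exact ⟨_, ⟨j, hj, rfl⟩, _, ⟨k, hk, rfl⟩, h⟩
      · rintro ⟨_, ⟨j, hj, rfl⟩, _, ⟨k, hk, rfl⟩, h⟩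
        exact ⟨j, k, hj, hk, h⟩
    · simp only [Set.mem_ofPred_eq, mem_take_iff_exists_get]
      constructor
      · rintro ⟨j, r, hj, h⟩
        exact ⟨_, ⟨j, hj, rfl⟩, r, h⟩
      · rintro ⟨_, ⟨j, hj, rfl⟩, r, h⟩
        exact ⟨j, r, hj, h⟩
  simp only [GRPLProv, IsDeducible, isGRPLProofFrom_iff]

namespace UQ

theorem lmul_one (q : UQ) : q.lmul 1 = q := by
  apply Subtype.ext
  change max 0 (q.1 + 1 - 1) = q.1
  rw [add_sub_cancel_right, max_eq_right q.2.1]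

theorem limp_self (q : UQ) : q.limp q = 1 := by
  apply Subtype.ext
  change min 1 (1 - q.1 + q.1) = 1
  rw [sub_add_cancel, min_self]

theorem lneg_zero : lneg 0 = 1 :=
  Subtype.ext (sub_zero 1)

theorem lneg_lmul (q r : UQ) : (q.lmul r).lneg = q.limp r.lneg := by
  apply Subtype.ext
  change 1 - max 0 (q.1 + r.1 - 1) = min 1 (1 - q.1 + (1 - r.1))
  rw [← min_sub_sub_left, sub_zero]
  congr 1
  ring

end UQ

/-- A set of formulas, given as a predicate, that contains the axioms of Łukasiewicz logic and is
closed under modus ponens. -/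
structure IsLukTheory (P : Fml → Prop) : Prop where
  ax {φ : Fml} : IsLukAxiom φ → P φ
  mp {φ ψ : Fml} : P φ → P (φ.imp ψ) → P ψ

namespace IsLukTheory

variable {P : Fml → Prop} {φ ψ χ : Fml}

theorem weaken (hP : IsLukTheory P) (φ : Fml) (h : P ψ) : P (φ.imp ψ) :=
  hP.mp h (hP.ax (.a1 ψ φ))

theorem imp_trans (hP : IsLukTheory P) (h₁ : P (φ.imp ψ)) (h₂ : P (ψ.imp χ)) : P (φ.imp χ) :=
  hP.mp h₂ (hP.mp h₁ (hP.ax (.a2 φ ψ χ)))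

theorem imp_detach (hP : IsLukTheory P) (φ ψ : Fml) : P (φ.imp ((φ.imp ψ).imp ψ)) :=
  hP.imp_trans (hP.ax (.a1 φ (ψ.imp φ))) (hP.ax (.a3 ψ φ))

theorem imp_anti_left (hP : IsLukTheory P) (χ : Fml) (h : P (φ.imp ψ)) :
    P ((ψ.imp χ).imp (φ.imp χ)) :=
  hP.mp h (hP.ax (.a2 φ ψ χ))

theorem imp_swap (hP : IsLukTheory P) (h : P (φ.imp (ψ.imp χ))) : P (ψ.imp (φ.imp χ)) :=
  hP.imp_trans (hP.imp_detach ψ χ) (hP.imp_anti_left χ h)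

theorem imp_mono_right (hP : IsLukTheory P) (φ : Fml) (h : P (ψ.imp χ)) :
    P ((φ.imp ψ).imp (φ.imp χ)) :=
  hP.mp h (hP.imp_swap (hP.ax (.a2 φ ψ χ)))

theorem imp_refl (hP : IsLukTheory P) (φ : Fml) : P (φ.imp φ) :=
  hP.mp (hP.ax (.a1 φ φ)) (hP.imp_swap (hP.ax (.a1 φ (φ.imp (φ.imp φ)))))

theorem neg_imp_imp (hP : IsLukTheory P) (φ ψ : Fml) : P (φ.neg.imp (φ.imp ψ)) :=
  hP.imp_trans (hP.ax (.a1 φ.neg ψ.neg)) (hP.ax (.a4 ψ φ))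

theorem neg_neg_imp (hP : IsLukTheory P) (φ : Fml) : P (φ.neg.neg.imp φ) := by
  have h : P (φ.neg.neg.imp ((φ.imp φ).imp φ)) :=
    hP.imp_trans (hP.neg_imp_imp φ.neg (φ.imp φ).neg) (hP.ax (.a4 φ (φ.imp φ)))
  exact hP.mp (hP.imp_refl φ) (hP.imp_swap h)

theorem imp_neg_neg (hP : IsLukTheory P) (φ : Fml) : P (φ.imp φ.neg.neg) :=
  hP.mp (hP.neg_neg_imp φ.neg) (hP.ax (.a4 φ.neg.neg φ))

theorem imp_contrapose (hP : IsLukTheory P) (φ ψ : Fml) :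
    P ((φ.imp ψ).imp (ψ.neg.imp φ.neg)) := by
  have h : P ((φ.imp ψ).imp (φ.neg.neg.imp ψ.neg.neg)) :=
    hP.imp_trans (hP.imp_anti_left ψ (hP.neg_neg_imp φ))
      (hP.imp_mono_right φ.neg.neg (hP.imp_neg_neg ψ))
  exact hP.imp_trans h (hP.ax (.a4 φ.neg ψ.neg))

theorem neg_imp_neg (hP : IsLukTheory P) (h : P (φ.imp ψ)) : P (ψ.neg.imp φ.neg) :=
  hP.mp h (hP.imp_contrapose φ ψ)

theorem imp_neg_swap (hP : IsLukTheory P) (h : P (φ.imp ψ.neg)) : P (ψ.imp φ.neg) :=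
  hP.imp_trans (hP.imp_neg_neg ψ) (hP.neg_imp_neg h)

theorem odot_imp (hP : IsLukTheory P) (h : P (φ.imp (ψ.imp χ))) : P ((φ.odot ψ).imp χ) := by
  have hχ : P (χ.neg.imp (φ.imp ψ.neg)) :=
    hP.imp_swap (hP.imp_trans h (hP.imp_contrapose ψ χ))
  exact hP.imp_trans (hP.neg_imp_neg hχ) (hP.neg_neg_imp χ)

theorem conj_imp_left (hP : IsLukTheory P) (φ ψ : Fml) : P ((φ.conj ψ).imp φ) :=
  hP.odot_imp (hP.ax (.a1 φ (φ.imp ψ)))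

theorem conj_imp_right (hP : IsLukTheory P) (φ ψ : Fml) : P ((φ.conj ψ).imp ψ) :=
  hP.odot_imp (hP.imp_detach φ ψ)

theorem imp_of_eqv (hP : IsLukTheory P) (h : P (φ.eqv ψ)) : P (φ.imp ψ) :=
  hP.mp h (hP.conj_imp_left (φ.imp ψ) (ψ.imp φ))

theorem imp_of_eqv_symm (hP : IsLukTheory P) (h : P (φ.eqv ψ)) : P (ψ.imp φ) :=
  hP.mp h (hP.conj_imp_right (φ.imp ψ) (ψ.imp φ))

end IsLukTheory

namespace RPLProv

variable {T : Set Fml} {φ ψ : Fml} {q r : UQ}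

theorem of_isRPLAxiom (h : IsRPLAxiom φ) : RPLProv T φ :=
  rplProv_iff_isDeducible.mpr <|
    .of_finite Set.finite_empty (fun _ => False.elim) (Or.inl h)

theorem of_mem (h : φ ∈ T) : RPLProv T φ :=
  rplProv_iff_isDeducible.mpr <|
    .of_finite Set.finite_empty (fun _ => False.elim) (Or.inr (Or.inl h))

theorem mp (hφ : RPLProv T φ) (hφψ : RPLProv T (φ.imp ψ)) : RPLProv T ψ := by
  rw [rplProv_iff_isDeducible] at *
  refine .of_finite (F := {φ, φ.imp ψ}) (Set.toFinite _) ?_ (Or.inr (Or.inr ⟨φ, by simp⟩))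
  rintro _ (rfl | rfl) <;> assumption

theorem induction {motive : Fml → Prop} (of_isRPLAxiom : ∀ {φ}, IsRPLAxiom φ → motive φ)
    (of_mem : ∀ {φ}, φ ∈ T → motive φ)
    (mp : ∀ {φ ψ}, motive φ → motive (φ.imp ψ) → motive ψ)
    (h : RPLProv T φ) : motive φ := by
  refine (rplProv_iff_isDeducible.mp h).mem_of_map_subset (S := {φ | motive φ}) ?_
  rintro φ (h | h | ⟨ψ, hψ, hψφ⟩)
  exacts [of_isRPLAxiom h, of_mem h, mp hψ hψφ]

theorem isLukTheory (T : Set Fml) : IsLukTheory (RPLProv T) where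
  ax h := of_isRPLAxiom (.luk h)
  mp := mp

theorem const_lmul_imp_odot (T : Set Fml) (q r : UQ) :
    RPLProv T ((Fml.const (q.lmul r)).imp ((Fml.const q).odot (Fml.const r))) := by
  have hT := isLukTheory T
  have imp_neg_imp_const :
      RPLProv T (((Fml.const q).imp (Fml.const r).neg).imp (Fml.const (q.lmul r).lneg)) := by
    rw [UQ.lneg_lmul]
    exact hT.imp_trans
      (hT.imp_mono_right _ (hT.imp_of_eqv (of_isRPLAxiom (.book_neg r))))
      (hT.imp_of_eqv (of_isRPLAxiom (.book_imp q r.lneg)))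
  exact hT.imp_neg_swap
    (hT.imp_trans imp_neg_imp_const (hT.imp_of_eqv_symm (of_isRPLAxiom (.book_neg _))))

theorem graded_mp (hφ : RPLProv T ((Fml.const q).imp φ))
    (hφψ : RPLProv T ((Fml.const r).imp (φ.imp ψ))) :
    RPLProv T ((Fml.const (q.lmul r)).imp ψ) :=
  have hT := isLukTheory T
  hT.imp_trans (const_lmul_imp_odot T q r)
    (hT.odot_imp (hT.imp_trans hφ (hT.imp_swap hφψ)))

theorem lifting (r : UQ) (hφ : RPLProv T ((Fml.const q).imp φ)) :
    RPLProv T ((Fml.const (r.limp q)).imp ((Fml.const r).imp φ)) :=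
  have hT := isLukTheory T
  hT.imp_trans (hT.imp_of_eqv_symm (of_isRPLAxiom (.book_imp r q))) (hT.imp_mono_right _ hφ)

theorem const_imp_of_isGRPLAxiom (h : IsGRPLAxiom q φ) : RPLProv T ((Fml.const q).imp φ) := by
  have hT := isLukTheory T
  cases h with
  | luk h => exact hT.weaken _ (hT.ax h)
  | const => exact hT.imp_refl _
  | book_neg q => exact hT.weaken _ (of_isRPLAxiom (.book_neg q))
  | book_imp q r => exact hT.weaken _ (of_isRPLAxiom (.book_imp q r))
  | zero => exact (of_isRPLAxiom .book_zero).mp (hT.neg_imp_imp _ _)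

end RPLProv

namespace GRPLProv

variable {T : Set (UQ × Fml)} {φ ψ : Fml} {q r : UQ}

theorem of_isGRPLAxiom (h : IsGRPLAxiom q φ) : GRPLProv T (q, φ) :=
  grplProv_iff_isDeducible.mpr <|
    .of_finite Set.finite_empty (fun _ => False.elim) (Or.inl h)

theorem of_mem (h : (q, φ) ∈ T) : GRPLProv T (q, φ) :=
  grplProv_iff_isDeducible.mpr <|
    .of_finite Set.finite_empty (fun _ => False.elim) (Or.inr (Or.inl h))

theorem mp (hφ : GRPLProv T (q, φ)) (hφψ : GRPLProv T (r, φ.imp ψ)) :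
    GRPLProv T (q.lmul r, ψ) := by
  rw [grplProv_iff_isDeducible] at *
  refine .of_finite (F := {(q, φ), (r, φ.imp ψ)}) (Set.toFinite _) ?_
    (Or.inr (Or.inr (Or.inl ⟨(q, φ), by simp, (r, φ.imp ψ), by simp⟩)))
  rintro _ (rfl | rfl) <;> assumption

theorem lifting (r : UQ) (hφ : GRPLProv T (q, φ)) :
    GRPLProv T (r.limp q, (Fml.const r).imp φ) := by
  rw [grplProv_iff_isDeducible] at *
  refine .of_finite (F := {(q, φ)}) (Set.toFinite _) ?_
    (Or.inr (Or.inr (Or.inr ⟨(q, φ), rfl, r, rfl⟩)))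
  rintro _ rfl
  exact hφ

theorem induction {motive : UQ → Fml → Prop}
    (of_isGRPLAxiom : ∀ {q φ}, IsGRPLAxiom q φ → motive q φ)
    (of_mem : ∀ {q φ}, (q, φ) ∈ T → motive q φ)
    (mp : ∀ {q r φ ψ}, motive q φ → motive r (φ.imp ψ) → motive (q.lmul r) ψ)
    (lifting : ∀ {q φ} r, motive q φ → motive (r.limp q) ((Fml.const r).imp φ))
    (h : GRPLProv T (q, φ)) : motive q φ := by
  refine (grplProv_iff_isDeducible.mp h).mem_of_map_subset (S := {p | motive p.1 p.2}) ?_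
  rintro ⟨s, ψ⟩ (h | h | ⟨⟨q, φ⟩, hφ, ⟨r, χ⟩, hχ, hφψ, hqr⟩ | ⟨⟨q, φ⟩, hφ, r, heq⟩)
  · exact of_isGRPLAxiom h
  · exact of_mem h
  · dsimp only at hφψ hqr
    subst hφψ hqr
    exact mp hφ hχ
  · cases heq
    exact lifting r hφ

theorem isLukTheory_one (T : Set (UQ × Fml)) : IsLukTheory fun φ => GRPLProv T (1, φ) where
  ax h := of_isGRPLAxiom (.luk h)
  mp hφ hφψ := UQ.lmul_one 1 ▸ hφ.mp hφψ

theorem one_of_isRPLAxiom (h : IsRPLAxiom φ) : GRPLProv T (1, φ) := by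
  have hT := isLukTheory_one T
  cases h with
  | luk h => exact hT.ax h
  | book_imp q r => exact of_isGRPLAxiom (.book_imp q r)
  | book_neg q => exact of_isGRPLAxiom (.book_neg q)
  | book_one => exact of_isGRPLAxiom (.const 1)
  | book_zero =>
    have lneg_imp : GRPLProv T (1, (Fml.const (UQ.lneg 0)).imp (Fml.const 0).neg) :=
      hT.imp_of_eqv_symm (of_isGRPLAxiom (.book_neg 0))
    rw [UQ.lneg_zero] at lneg_imp
    exact hT.mp (of_isGRPLAxiom (.const 1)) lneg_imp

theorem one_const_imp_iff : GRPLProv T (1, (Fml.const q).imp φ) ↔ GRPLProv T (q, φ) where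
  mp h := UQ.lmul_one q ▸ (of_isGRPLAxiom (.const q)).mp h
  mpr h := UQ.limp_self q ▸ h.lifting q

end GRPLProv

/-- GRPL embeds in RPL: for every set `T` of graded formulas and every
graded formula `⟨q,φ⟩`, `T ⊢_GRPL ⟨q,φ⟩` iff `{ r̄→ψ : ⟨r,ψ⟩ ∈ T } ⊢_RPL q̄→φ`. -/
theorem grpl_embeds_in_rpl (T : Set (UQ × Fml)) (q : UQ) (φ : Fml) :
    GRPLProv T (q, φ) ↔
      RPLProv ((fun p : UQ × Fml => (Fml.const p.1).imp p.2) '' T) ((Fml.const q).imp φ) := by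
  constructor <;> intro h
  · exact h.induction RPLProv.const_imp_of_isGRPLAxiom
      (fun hψ => RPLProv.of_mem ⟨_, hψ, rfl⟩) RPLProv.graded_mp RPLProv.lifting
  · rw [← GRPLProv.one_const_imp_iff]
    refine h.induction (motive := fun ψ => GRPLProv T (1, ψ)) GRPLProv.one_of_isRPLAxiom ?_
      (GRPLProv.isLukTheory_one T).mp
    rintro _ ⟨_, hψ, rfl⟩
    exact GRPLProv.one_const_imp_iff.mpr (GRPLProv.of_mem hψ)
end

section
/- Finite strong standard completeness for RPL: if Γ ∪ {φ} is a finite set of formulas of the language of RPL, then Γ ⊢_RPL φ if and only if every assignment into [0,1]_Ł with rational constants interpreted canonically that gives value 1 to all formulas of Γ gives value 1 to φ. -/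
/-!
If `Γ` does not prove `φ`, then, by prelinearity, a maximal extension of `Γ` not proving `φ` is
prime, so its Lindenbaum algebra is a Wajsberg chain and embeds as the unit interval into an
ordered abelian group, Chang's group. By Hahn's theorem this group is a group of real-valued
functions ordered lexicographically, and weighting the coordinates by rapidly decreasing positive
reals yields a homomorphism to the reals that is strictly monotone on any prescribed finite set.
On the classes of the subformulas of `Γ` and `φ` it therefore respects the truncated implication,
with `φ` below `1`. It takes the canonical values at the constants, because the bookkeeping axioms
make it additive there and an additive function on the rational unit interval is linear.
-/

section PositiveFunctionals

open Filter Topology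

theorem exists_weights_sum_pos {ι : Type*} [LinearOrder ι] (C : Finset ι) (P : Finset (ι → ℝ))
    (hP : ∀ c ∈ P, ∃ i ∈ C, (∀ j ∈ C, j < i → c j = 0) ∧ 0 < c i) :
    ∃ w : ι → ℝ, ∀ c ∈ P, 0 < ∑ i ∈ C, w i * c i := by
  classical
  induction C using Finset.induction_on_min generalizing P with
  | empty => exact ⟨0, fun c hc => by simpa using hP c hc⟩
  | insert a s has ih =>
    have a_notMem : a ∉ s := fun ha => lt_irrefl a (has a ha)
    have lead_cases : ∀ c ∈ P, 0 < c a ∨ c a = 0 ∧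
        ∃ i ∈ s, (∀ j ∈ s, j < i → c j = 0) ∧ 0 < c i := by
      intro c hc
      obtain ⟨i, hi, hlow, hpos⟩ := hP c hc
      rcases Finset.mem_insert.1 hi with rfl | his
      · exact .inl hpos
      · exact .inr ⟨hlow a (Finset.mem_insert_self a s) (has i his), i, his,
          fun j hj => hlow j (Finset.mem_insert_of_mem hj), hpos⟩
    obtain ⟨w, hw⟩ := ih (P.filter (¬ 0 < · a)) fun c hc =>
      ((lead_cases c (Finset.mem_filter.1 hc).1).resolve_left (Finset.mem_filter.1 hc).2).2
    have eventually_pos : ∀ᶠ ε in 𝓝[>] (0 : ℝ), ∀ c ∈ P, 0 < c a →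
        0 < c a + ε * ∑ i ∈ s, w i * c i := by
      refine (eventually_all_finset P).2 fun c _ => eventually_imp_distrib_left.2 fun hca => ?_
      have hcont : Continuous fun ε : ℝ => c a + ε * ∑ i ∈ s, w i * c i := by fun_prop
      exact ((hcont.tendsto 0).mono_left nhdsWithin_le_nhds).eventually_const_lt (by simpa)
    obtain ⟨ε, hε, hε₀⟩ := (eventually_pos.and self_mem_nhdsWithin).exists
    refine ⟨Function.update (ε • w) a 1, fun c hc => ?_⟩
    have sum_eq : ∑ i ∈ insert a s, Function.update (ε • w) a 1 i * c i =
        c a + ε * ∑ i ∈ s, w i * c i := by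
      rw [Finset.sum_insert a_notMem, Function.update_self, one_mul, Finset.mul_sum]
      congr 1
      refine Finset.sum_congr rfl fun i hi => ?_
      rw [Function.update_of_ne (ne_of_mem_of_not_mem hi a_notMem), Pi.smul_apply, smul_eq_mul,
        mul_assoc]
    rw [sum_eq]
    by_cases hca : 0 < c a
    · exact hε c hc hca
    · rw [((lead_cases c hc).resolve_left hca).1, zero_add]
      exact mul_pos hε₀ (hw c (Finset.mem_filter.2 ⟨hc, hca⟩))

variable {G : Type*} [AddCommGroup G] [LinearOrder G] [IsOrderedAddMonoid G]

theorem exists_addMonoidHom_pos (P : Finset G) (hP : ∀ p ∈ P, 0 < p) :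
    ∃ h : G →+ ℝ, ∀ p ∈ P, 0 < h p := by
  classical
  obtain ⟨f, hf, -⟩ := hahnEmbedding_isOrderedAddMonoid G
  let coeff : G → FiniteArchimedeanClass G → ℝ := fun p => (ofLex (f p)).coeff
  have exists_lead : ∀ p ∈ P, ∃ i, (∀ j < i, coeff p j = 0) ∧ 0 < coeff p i := by
    intro p hp
    have hfp : f 0 < f p := f.monotone'.strictMono_of_injective hf (hP p hp)
    rw [map_zero, HahnSeries.lt_iff] at hfp
    obtain ⟨i, hlow, hpos⟩ := hfp
    exact ⟨i, fun j hj => (hlow j hj).symm, hpos⟩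
  choose lead lead_low lead_pos using exists_lead
  let C := P.attach.image fun p => lead p.1 p.2
  obtain ⟨w, hw⟩ := exists_weights_sum_pos C (P.image coeff) <| Finset.forall_mem_image.2
    fun p hp => ⟨lead p hp, Finset.mem_image_of_mem _ (P.mem_attach ⟨p, hp⟩),
      fun j _ => lead_low p hp j, lead_pos p hp⟩
  refine ⟨{ toFun := fun p => ∑ i ∈ C, w i * coeff p i, map_zero' := ?_, map_add' := ?_ },
    fun p hp => hw (coeff p) (Finset.mem_image_of_mem coeff hp)⟩
  · simp [coeff]
  · simp [coeff, mul_add, Finset.sum_add_distrib]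

theorem exists_addMonoidHom_strictMonoOn {u : G} (hu : 0 < u) {S : Set G} (hS : S.Finite) :
    ∃ h : G →+ ℝ, h u = 1 ∧ StrictMonoOn h S := by
  classical
  let D := (hS.toFinset ×ˢ hS.toFinset).image fun p => p.1 - p.2
  obtain ⟨g, hg⟩ := exists_addMonoidHom_pos (insert u (D.filter (0 < ·))) <|
    (Finset.forall_mem_insert _ _ _).2 ⟨hu, fun p hp => (Finset.mem_filter.1 hp).2⟩
  have hgu : 0 < g u := hg u (Finset.mem_insert_self _ _)
  refine ⟨(AddMonoidHom.mulLeft (g u)⁻¹).comp g, inv_mul_cancel₀ hgu.ne', fun x hx y hy hxy => ?_⟩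
  have diff_mem : y - x ∈ D :=
    Finset.mem_image.2 ⟨(y, x), by simp [hx, hy], rfl⟩
  have diff_pos : 0 < g (y - x) :=
    hg _ (Finset.mem_insert_of_mem (Finset.mem_filter.2 ⟨diff_mem, sub_pos.2 hxy⟩))
  rw [map_sub, sub_pos] at diff_pos
  exact mul_lt_mul_of_pos_left diff_pos (inv_pos.2 hgu)

end PositiveFunctionals

/-- Wajsberg algebras in the axiomatization of Font, Rodríguez and Torrens, which are
term-equivalent to MV-algebras. Implication, negation and the unit of the algebra are written
`⇨`, `ᶜ` and `⊤`; the implication is in general not a Heyting implication. -/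
class WajsbergAlgebra (A : Type*) extends HImp A, Compl A, Top A where
  top_himp (x : A) : ⊤ ⇨ x = x
  himp_trans (x y z : A) : (x ⇨ y) ⇨ (y ⇨ z) ⇨ x ⇨ z = ⊤
  himp_himp_comm (x y : A) : (x ⇨ y) ⇨ y = (y ⇨ x) ⇨ x
  compl_himp_compl_himp (x y : A) : (xᶜ ⇨ yᶜ) ⇨ y ⇨ x = ⊤

/-- The strong conjunction `x ⊙ y`, interpreting `Fml.odot`. -/
def WajsbergAlgebra.otimes {A : Type*} [WajsbergAlgebra A] (x y : A) : A := (x ⇨ yᶜ)ᶜ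

/-- The strong disjunction (truncated sum) `x ∔ y` of MV-algebras. -/
def WajsbergAlgebra.oplus {A : Type*} [WajsbergAlgebra A] (x y : A) : A := xᶜ ⇨ y

local infixl:70 "⊙" => WajsbergAlgebra.otimes
local infixl:65 "∔" => WajsbergAlgebra.oplus

namespace WajsbergAlgebra

section Order

variable {A : Type*} [WajsbergAlgebra A] {x y z : A}

theorem himp_self (x : A) : x ⇨ x = ⊤ := by
  simpa only [top_himp] using himp_trans ⊤ ⊤ x

theorem himp_top (x : A) : x ⇨ ⊤ = ⊤ := by
  have himp_top_himp_top : (x ⇨ ⊤) ⇨ ⊤ = ⊤ := by rw [himp_himp_comm, top_himp, himp_self]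
  simpa only [top_himp, himp_top_himp_top] using himp_trans ⊤ x ⊤

instance : PartialOrder A where
  le x y := x ⇨ y = ⊤
  le_refl := himp_self
  le_trans x y z (hxy : x ⇨ y = ⊤) (hyz : y ⇨ z = ⊤) := by
    simpa only [hxy, hyz, top_himp] using himp_trans x y z
  le_antisymm x y (hxy : x ⇨ y = ⊤) (hyx : y ⇨ x = ⊤) := by
    simpa only [hxy, hyx, top_himp] using (himp_himp_comm x y).symm

theorem le_iff_himp_eq_top : x ≤ y ↔ x ⇨ y = ⊤ := Iff.rfl

theorem himp_le_himp_himp (x y z : A) : x ⇨ y ≤ (y ⇨ z) ⇨ x ⇨ z := himp_trans x y z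

theorem le_himp (x y : A) : x ≤ y ⇨ x := by
  simpa only [le_iff_himp_eq_top, himp_top, top_himp] using himp_trans y ⊤ x

theorem himp_le_himp_right (h : x ≤ y) (z : A) : y ⇨ z ≤ x ⇨ z := by
  rw [le_iff_himp_eq_top] at h
  simpa only [le_iff_himp_eq_top, h, top_himp] using himp_trans x y z

theorem le_himp_himp (x y : A) : x ≤ (x ⇨ y) ⇨ y := by
  rw [himp_himp_comm]
  exact le_himp x (y ⇨ x)

theorem himp_left_comm (x y z : A) : x ⇨ y ⇨ z = y ⇨ x ⇨ z := by
  have le (x y z : A) : x ⇨ y ⇨ z ≤ y ⇨ x ⇨ z :=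
    (himp_le_himp_himp x (y ⇨ z) z).trans (himp_le_himp_right (le_himp_himp y z) (x ⇨ z))
  exact (le x y z).antisymm (le y x z)

theorem le_himp_comm : x ≤ y ⇨ z ↔ y ≤ x ⇨ z := by
  rw [le_iff_himp_eq_top, himp_left_comm, le_iff_himp_eq_top]

theorem himp_le_himp_left (h : x ≤ y) (z : A) : z ⇨ x ≤ z ⇨ y := by
  have := himp_le_himp_himp z x y
  rwa [le_himp_comm, le_iff_himp_eq_top.1 h, le_iff_himp_eq_top, top_himp] at this

theorem compl_himp_compl_le (x y : A) : xᶜ ⇨ yᶜ ≤ y ⇨ x := compl_himp_compl_himp x y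

theorem compl_compl (x : A) : xᶜᶜ = x := by
  have compl_compl_le (x : A) : xᶜᶜ ≤ x :=
    calc xᶜᶜ ≤ (⊤ : A)ᶜᶜ ⇨ xᶜᶜ := le_himp _ _
      _ ≤ xᶜ ⇨ (⊤ : A)ᶜ := compl_himp_compl_le _ _
      _ ≤ ⊤ ⇨ x := compl_himp_compl_le _ _
      _ = x := top_himp x
  refine (compl_compl_le x).antisymm ?_
  have := compl_himp_compl_le xᶜᶜ x
  rwa [le_iff_himp_eq_top.1 (compl_compl_le xᶜ), le_iff_himp_eq_top, top_himp] at this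

theorem compl_himp_compl (x y : A) : xᶜ ⇨ yᶜ = y ⇨ x :=
  (compl_himp_compl_le x y).antisymm <| by
    simpa only [compl_compl] using compl_himp_compl_le yᶜ xᶜ

theorem compl_himp_comm (x y : A) : xᶜ ⇨ y = yᶜ ⇨ x := by
  rw [← compl_himp_compl, compl_compl]

theorem himp_compl_comm (x y : A) : x ⇨ yᶜ = y ⇨ xᶜ := by
  rw [← compl_himp_compl, compl_compl]

theorem compl_injective : Function.Injective (compl : A → A) :=
  Function.LeftInverse.injective compl_compl

theorem compl_le_compl (h : x ≤ y) : yᶜ ≤ xᶜ := by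
  rwa [le_iff_himp_eq_top, compl_himp_compl]

instance : BoundedOrder A where
  le_top := himp_top
  bot := ⊤ᶜ
  bot_le x := by
    rw [le_iff_himp_eq_top, compl_himp_comm]
    exact himp_top xᶜ

theorem compl_top : (⊤ : A)ᶜ = ⊥ := rfl

theorem compl_bot : (⊥ : A)ᶜ = ⊤ := compl_compl ⊤

theorem himp_bot (x : A) : x ⇨ ⊥ = xᶜ := by
  rw [← compl_top, himp_compl_comm, top_himp]

instance : SemilatticeSup A where
  sup x y := (x ⇨ y) ⇨ y
  le_sup_left := le_himp_himp
  le_sup_right x y := le_himp y (x ⇨ y)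
  sup_le x y z hxz hyz := by
    have sup_eq : (z ⇨ y) ⇨ y = z := by
      rw [himp_himp_comm, le_iff_himp_eq_top.1 hyz, top_himp]
    exact (himp_le_himp_right (himp_le_himp_right hxz y) y).trans_eq sup_eq

theorem sup_def (x y : A) : x ⊔ y = (x ⇨ y) ⇨ y := rfl

theorem sup_himp_right (x y : A) : x ⊔ y ⇨ y = x ⇨ y :=
  (himp_le_himp_right le_sup_left y).antisymm (le_himp_himp (x ⇨ y) y)

theorem himp_sup_himp (x y : A) : (x ⇨ y) ⊔ (y ⇨ x) = ⊤ := by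
  have himp_himp_himp : (x ⇨ y) ⇨ y ⇨ x = y ⇨ x :=
    calc (x ⇨ y) ⇨ y ⇨ x
        = (x ⊔ y ⇨ y) ⇨ x ⊔ y ⇨ x := by
          rw [sup_himp_right, sup_comm, sup_himp_right]
      _ = xᶜ ⇨ yᶜ ⊔ (x ⊔ y)ᶜ := by
          rw [← compl_himp_compl y, ← compl_himp_compl x, himp_left_comm, sup_def yᶜ]
      _ = xᶜ ⇨ yᶜ := by rw [sup_eq_left.2 (compl_le_compl le_sup_right)]
      _ = y ⇨ x := compl_himp_compl x y
  rw [sup_def, himp_himp_himp, himp_self]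

theorem sup_eq_top_of_sup_himp_eq_top (hx : z ⊔ x = ⊤) (hxy : z ⊔ (x ⇨ y) = ⊤) :
    z ⊔ y = ⊤ := by
  have le_himp_sup : z ⊔ x ≤ z ⊔ (x ⇨ y) ⇨ z ⊔ y := by
    refine sup_le (le_sup_left.trans (le_himp _ _)) (le_himp_comm.2 (sup_le ?_ ?_))
    · exact le_sup_left.trans (le_himp _ _)
    · exact himp_le_himp_left le_sup_right x
  rwa [hx, hxy, top_himp, top_le_iff] at le_himp_sup

end Order

section Operations

variable {A : Type*} [WajsbergAlgebra A] {x y z : A}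

theorem otimes_himp (x y z : A) : x ⊙ y ⇨ z = x ⇨ y ⇨ z := by
  rw [otimes, compl_himp_comm, himp_left_comm, compl_himp_compl]

theorem otimes_le_iff_le_himp : x ⊙ y ≤ z ↔ x ≤ y ⇨ z := by
  rw [le_iff_himp_eq_top, otimes_himp, le_iff_himp_eq_top]

theorem compl_otimes (x y : A) : (x ⊙ y)ᶜ = xᶜ ∔ yᶜ := by
  rw [otimes, oplus, compl_compl, compl_compl]

theorem compl_oplus (x y : A) : (x ∔ y)ᶜ = xᶜ ⊙ yᶜ := by
  rw [otimes, oplus, compl_compl]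

theorem otimes_comm (x y : A) : x ⊙ y = y ⊙ x := by
  rw [otimes, otimes, himp_compl_comm]

theorem oplus_comm (x y : A) : x ∔ y = y ∔ x := compl_himp_comm x y

theorem otimes_assoc (x y z : A) : x ⊙ y ⊙ z = x ⊙ (y ⊙ z) :=
  eq_of_forall_ge_iff fun w => by
    simp only [le_iff_himp_eq_top, otimes_himp]

theorem oplus_assoc (x y z : A) : x ∔ y ∔ z = x ∔ (y ∔ z) :=
  compl_injective <| by simp only [compl_oplus, otimes_assoc]

instance : Std.Commutative (otimes : A → A → A) := ⟨otimes_comm⟩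

instance : Std.Associative (otimes : A → A → A) := ⟨otimes_assoc⟩

theorem bot_oplus (x : A) : ⊥ ∔ x = x := by
  rw [oplus, compl_bot, top_himp]

theorem otimes_top (x : A) : x ⊙ ⊤ = x := by
  rw [otimes, compl_top, himp_bot, compl_compl]

theorem compl_otimes_self (x : A) : xᶜ ⊙ x = ⊥ := by
  rw [otimes, himp_self, compl_top]

theorem otimes_le_left (x y : A) : x ⊙ y ≤ x := otimes_le_iff_le_himp.2 (le_himp x y)

theorem otimes_le_right (x y : A) : x ⊙ y ≤ y := otimes_comm x y ▸ otimes_le_left y x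

theorem otimes_le_otimes_right (h : x ≤ y) (z : A) : x ⊙ z ≤ y ⊙ z :=
  compl_le_compl (himp_le_himp_right h zᶜ)

theorem oplus_le_oplus_right (h : x ≤ y) (z : A) : x ∔ z ≤ y ∔ z :=
  himp_le_himp_right (compl_le_compl h) z

theorem oplus_eq_top_iff : x ∔ y = ⊤ ↔ xᶜ ≤ y := Iff.rfl

theorem otimes_himp_self_comm (x y : A) : x ⊙ (x ⇨ y) = y ⊙ (y ⇨ x) := by
  rw [otimes, otimes, himp_compl_comm, ← compl_himp_compl y x, himp_himp_comm, compl_himp_compl,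
    himp_compl_comm y]

theorem otimes_himp_of_le (h : y ≤ x) : x ⊙ (x ⇨ y) = y := by
  rw [otimes_himp_self_comm, le_iff_himp_eq_top.1 h, otimes_top]

theorem otimes_himp_le (x y : A) : x ⊙ (x ⇨ y) ≤ y := by
  rw [otimes_comm, otimes_le_iff_le_himp]

theorem oplus_otimes_eq_otimes_oplus (hxy : x ≤ yᶜ) (hzy : z ≤ yᶜ) :
    (x ∔ y) ⊙ z = x ⊙ (y ∔ z) :=
  calc (x ∔ y) ⊙ z = (yᶜ ⇨ x) ⊙ (yᶜ ⊙ (yᶜ ⇨ z)) := by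
        rw [oplus_comm, oplus, otimes_himp_of_le hzy]
    _ = yᶜ ⊙ (yᶜ ⇨ x) ⊙ (yᶜ ⇨ z) := by ac_rfl
    _ = x ⊙ (y ∔ z) := by rw [oplus, otimes_himp_of_le hxy]

theorem otimes_oplus_eq_oplus_otimes (hxy : yᶜ ≤ x) (hzy : yᶜ ≤ z) :
    (x ⊙ y) ∔ z = x ∔ (y ⊙ z) :=
  compl_injective <| by
    simpa only [compl_oplus, compl_otimes] using oplus_otimes_eq_otimes_oplus
      (compl_le_compl hxy) (compl_le_compl hzy)

theorem oplus_otimes_eq_oplus_otimes (hxy : x ≤ yᶜ) (hyz : yᶜ ≤ z) :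
    (x ∔ y) ⊙ z = x ∔ (y ⊙ z) := by
  have compl_otimes_himp : (y ⊙ z)ᶜ = z ⇨ yᶜ := by rw [otimes_comm, otimes, compl_compl]
  have himp_le : (z ⇨ yᶜ) ⇨ x ≤ z :=
    (himp_le_himp_left hxy _).trans (sup_le le_rfl hyz : z ⊔ yᶜ ≤ z)
  calc (x ∔ y) ⊙ z = z ⊙ (z ⊙ (z ⇨ yᶜ) ⇨ x) := by
        rw [oplus_comm, oplus, otimes_comm, otimes_himp_of_le hyz]
    _ = z ⊙ (z ⇨ (z ⇨ yᶜ) ⇨ x) := by rw [otimes_himp]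
    _ = (z ⇨ yᶜ) ⇨ x := otimes_himp_of_le himp_le
    _ = x ∔ (y ⊙ z) := by rw [← compl_otimes_himp, ← oplus, oplus_comm]

end Operations

/-- Chang's group of a Wajsberg chain, the group in which the chain is the unit interval below
`ChangGroup.ofChain ⊤`. An element is encoded by its integer part and its fractional part, an
element of the chain other than `⊤`. -/
@[ext] structure ChangGroup (A : Type*) [WajsbergAlgebra A] where
  int : ℤ
  frac : A
  frac_ne_top : frac ≠ ⊤

namespace ChangGroup

section Operations

variable {A : Type*} [WajsbergAlgebra A]

noncomputable instance : PartialOrder (ChangGroup A) :=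
  PartialOrder.lift (fun p => toLex (p.int, p.frac)) fun _ _ h =>
    ChangGroup.ext (congrArg (fun a => (ofLex a).1) h) (congrArg (fun a => (ofLex a).2) h)

theorem le_iff {p q : ChangGroup A} : p ≤ q ↔ p.int < q.int ∨ p.int = q.int ∧ p.frac ≤ q.frac :=
  Prod.Lex.toLex_le_toLex

theorem lt_iff {p q : ChangGroup A} : p < q ↔ p.int < q.int ∨ p.int = q.int ∧ p.frac < q.frac :=
  Prod.Lex.toLex_lt_toLex

theorem otimes_ne_top {x : A} (hx : x ≠ ⊤) (y : A) : x ⊙ y ≠ ⊤ :=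
  ne_top_of_le_ne_top hx (otimes_le_left x y)

open Classical in
noncomputable instance : Add (ChangGroup A) where
  add p q := if h : p.frac ∔ q.frac = ⊤
    then ⟨p.int + q.int + 1, p.frac ⊙ q.frac, otimes_ne_top p.frac_ne_top q.frac⟩
    else ⟨p.int + q.int, p.frac ∔ q.frac, h⟩

theorem add_of_eq_top {p q : ChangGroup A} (h : p.frac ∔ q.frac = ⊤) :
    p + q = ⟨p.int + q.int + 1, p.frac ⊙ q.frac, otimes_ne_top p.frac_ne_top q.frac⟩ :=
  dif_pos h

theorem add_of_ne_top {p q : ChangGroup A} (h : p.frac ∔ q.frac ≠ ⊤) :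
    p + q = ⟨p.int + q.int, p.frac ∔ q.frac, h⟩ :=
  dif_neg h

protected theorem add_comm (p q : ChangGroup A) : p + q = q + p := by
  by_cases h : p.frac ∔ q.frac = ⊤
  · rw [add_of_eq_top h, add_of_eq_top (by rwa [oplus_comm])]
    simp only [otimes_comm, _root_.add_comm]
  · rw [add_of_ne_top h, add_of_ne_top (by rwa [oplus_comm])]
    simp only [oplus_comm, _root_.add_comm]

protected theorem add_le_add_right {p q : ChangGroup A} (h : p ≤ q) (r : ChangGroup A) :
    p + r ≤ q + r := by
  have oplus_mono (hpq : p.frac ≤ q.frac) : p.frac ∔ r.frac ≤ q.frac ∔ r.frac :=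
    oplus_le_oplus_right hpq r.frac
  rw [le_iff] at h
  by_cases hp : p.frac ∔ r.frac = ⊤ <;> by_cases hq : q.frac ∔ r.frac = ⊤
  · rw [add_of_eq_top hp, add_of_eq_top hq, le_iff]
    exact h.imp (by dsimp; omega) fun h => ⟨by dsimp; omega, otimes_le_otimes_right h.2 r.frac⟩
  · have int_lt : p.int < q.int :=
      h.resolve_right fun h => hq (top_le_iff.1 (hp.symm.trans_le (oplus_mono h.2)))
    have frac_le : p.frac ⊙ r.frac ≤ q.frac ∔ r.frac :=
      (otimes_le_right _ _).trans (le_himp _ _)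
    rw [add_of_eq_top hp, add_of_ne_top hq, le_iff]
    rcases (Int.add_one_le_of_lt int_lt).lt_or_eq with int_lt | int_eq
    · exact .inl (by dsimp; omega)
    · exact .inr ⟨by dsimp; omega, frac_le⟩
  · rw [add_of_ne_top hp, add_of_eq_top hq, le_iff]
    exact .inl (by dsimp; omega)
  · rw [add_of_ne_top hp, add_of_ne_top hq, le_iff]
    exact h.imp (by dsimp; omega) fun h => ⟨by dsimp; omega, oplus_mono h.2⟩

end Operations

section Nontrivial

variable {A : Type*} [WajsbergAlgebra A] [Nontrivial A] {x y : A}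

open Classical in
/-- The element `n + x` of Chang's group, where the fractional part `x` is allowed to be `⊤`. -/
noncomputable def ofIntFrac (n : ℤ) (x : A) : ChangGroup A :=
  if h : x = ⊤ then ⟨n + 1, ⊥, bot_ne_top⟩ else ⟨n, x, h⟩

theorem ofIntFrac_top (n : ℤ) : ofIntFrac n (⊤ : A) = ⟨n + 1, ⊥, bot_ne_top⟩ := dif_pos rfl

theorem ofIntFrac_of_ne_top (n : ℤ) (hx : x ≠ ⊤) : ofIntFrac n x = ⟨n, x, hx⟩ := dif_neg hx

/-- The embedding of a Wajsberg chain as the unit interval of its Chang group. -/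
noncomputable def ofChain (x : A) : ChangGroup A := ofIntFrac 0 x

noncomputable instance : Zero (ChangGroup A) := ⟨⟨0, ⊥, bot_ne_top⟩⟩

noncomputable instance : Neg (ChangGroup A) where
  neg p := ofIntFrac (-p.int - 1) p.fracᶜ

protected theorem zero_add (p : ChangGroup A) : 0 + p = p := by
  have zero_frac_oplus : (0 : ChangGroup A).frac ∔ p.frac = p.frac := bot_oplus p.frac
  rw [add_of_ne_top (zero_frac_oplus.trans_ne p.frac_ne_top)]
  exact ChangGroup.ext (_root_.zero_add p.int) zero_frac_oplus

protected theorem neg_add_cancel (p : ChangGroup A) : -p + p = 0 := by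
  change ofIntFrac (-p.int - 1) p.fracᶜ + p = 0
  obtain ⟨n, x, hx⟩ := p
  by_cases hxc : xᶜ = ⊤
  · obtain rfl : x = ⊥ := by rw [← compl_compl x, hxc, compl_top]
    simp only [hxc, ofIntFrac_top]
    rw [add_of_ne_top (by simpa only [bot_oplus])]
    exact ChangGroup.ext (by change -n - 1 + 1 + n = 0; ring) (bot_oplus ⊥)
  · rw [ofIntFrac_of_ne_top _ hxc, add_of_eq_top (oplus_eq_top_iff.2 (compl_compl x).le)]
    exact ChangGroup.ext (by change -n - 1 + n + 1 = 0; ring) (compl_otimes_self x)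

theorem ofChain_bot : ofChain (⊥ : A) = 0 := ofIntFrac_of_ne_top 0 bot_ne_top

theorem ofChain_strictMono : StrictMono (ofChain : A → ChangGroup A) := by
  intro x y hxy
  unfold ofChain
  rw [lt_iff, ofIntFrac_of_ne_top 0 hxy.ne_top]
  rcases eq_or_ne y ⊤ with rfl | hy
  · rw [ofIntFrac_top]
    exact .inl zero_lt_one
  · rw [ofIntFrac_of_ne_top 0 hy]
    exact .inr ⟨rfl, hxy⟩

theorem ofChain_himp_add (h : y ≤ x) :
    ofChain (x ⇨ y) + ofChain x = ofChain ⊤ + ofChain y := by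
  rcases eq_or_ne x ⊤ with rfl | hx
  · rw [top_himp, ChangGroup.add_comm]
  rcases eq_or_ne (x ⇨ y) ⊤ with hxy | hxy
  · rw [hxy, h.antisymm hxy]
  have hy : y ≠ ⊤ := ne_top_of_le_ne_top hx h
  have himp_oplus : (x ⇨ y) ∔ x = ⊤ := by
    rw [oplus_comm, oplus_eq_top_iff, ← himp_bot]
    exact himp_le_himp_left bot_le x
  unfold ofChain
  rw [ofIntFrac_of_ne_top 0 hx, ofIntFrac_of_ne_top 0 hxy, ofIntFrac_of_ne_top 0 hy, ofIntFrac_top,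
    add_of_eq_top himp_oplus, add_of_ne_top (by simpa only [bot_oplus])]
  exact ChangGroup.ext rfl <| by
    change (x ⇨ y) ⊙ x = ⊥ ∔ y
    rw [otimes_comm, otimes_himp_of_le h, bot_oplus]

end Nontrivial

section Chain

variable {A : Type*} [WajsbergAlgebra A] [Std.Total (α := A) (· ≤ ·)]

theorem le_compl_of_oplus_ne_top {x y : A} (h : x ∔ y ≠ ⊤) : y ≤ xᶜ :=
  (Std.Total.total xᶜ y).resolve_left h

theorem add_assoc_of_ne_top_of_eq_top {p q r : ChangGroup A} (hpq : p.frac ∔ q.frac ≠ ⊤)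
    (hqr : q.frac ∔ r.frac = ⊤) : p + q + r = p + (q + r) := by
  have frac_eq : (p.frac ∔ q.frac) ⊙ r.frac = p.frac ∔ (q.frac ⊙ r.frac) :=
    oplus_otimes_eq_oplus_otimes (le_compl_of_oplus_ne_top (by rwa [oplus_comm])) hqr
  have left_carries : p.frac ∔ q.frac ∔ r.frac = ⊤ := by
    rw [oplus_assoc, hqr]
    exact le_top.antisymm (le_himp ⊤ _)
  have right_stays : p.frac ∔ (q.frac ⊙ r.frac) ≠ ⊤ := by
    rw [← frac_eq, otimes_comm]
    exact otimes_ne_top r.frac_ne_top _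
  rw [add_of_ne_top hpq, add_of_eq_top hqr, add_of_eq_top left_carries, add_of_ne_top right_stays]
  exact ChangGroup.ext (by ring) frac_eq

protected theorem add_assoc (p q r : ChangGroup A) : p + q + r = p + (q + r) := by
  by_cases hpq : p.frac ∔ q.frac = ⊤ <;> by_cases hqr : q.frac ∔ r.frac = ⊤
  · have frac_eq : (p.frac ⊙ q.frac) ∔ r.frac = p.frac ∔ (q.frac ⊙ r.frac) :=
      otimes_oplus_eq_oplus_otimes (by rwa [oplus_comm] at hpq) hqr
    rw [add_of_eq_top hpq, add_of_eq_top hqr]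
    by_cases h : (p.frac ⊙ q.frac) ∔ r.frac = ⊤
    · rw [add_of_eq_top h, add_of_eq_top (frac_eq ▸ h)]
      exact ChangGroup.ext (by ring) (otimes_assoc _ _ _)
    · rw [add_of_ne_top h, add_of_ne_top (frac_eq ▸ h)]
      exact ChangGroup.ext (by ring) frac_eq
  · rw [oplus_comm] at hpq hqr
    rw [ChangGroup.add_comm p q, ChangGroup.add_comm _ r, ChangGroup.add_comm p (q + r),
      ChangGroup.add_comm q r, add_assoc_of_ne_top_of_eq_top hqr hpq]
  · exact add_assoc_of_ne_top_of_eq_top hpq hqr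
  · have frac_eq : (p.frac ∔ q.frac) ⊙ r.frac = p.frac ⊙ (q.frac ∔ r.frac) :=
      oplus_otimes_eq_otimes_oplus (le_compl_of_oplus_ne_top (by rwa [oplus_comm] at hpq))
        (le_compl_of_oplus_ne_top hqr)
    rw [add_of_ne_top hpq, add_of_ne_top hqr]
    by_cases h : p.frac ∔ q.frac ∔ r.frac = ⊤
    · rw [add_of_eq_top h, add_of_eq_top (oplus_assoc p.frac _ _ ▸ h)]
      exact ChangGroup.ext (by ring) frac_eq
    · rw [add_of_ne_top h, add_of_ne_top (oplus_assoc p.frac _ _ ▸ h)]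
      exact ChangGroup.ext (by ring) (oplus_assoc _ _ _)

noncomputable instance [Nontrivial A] : AddCommGroup (ChangGroup A) where
  add_assoc := ChangGroup.add_assoc
  add_comm := ChangGroup.add_comm
  zero_add := ChangGroup.zero_add
  add_zero p := (ChangGroup.add_comm p 0).trans (ChangGroup.zero_add p)
  neg_add_cancel := ChangGroup.neg_add_cancel
  nsmul := nsmulRec
  zsmul := zsmulRec

noncomputable instance : LinearOrder (ChangGroup A) where
  le_total p q := by
    rw [le_iff, le_iff]
    rcases lt_trichotomy p.int q.int with int_lt | int_eq | int_lt
    · exact .inl (.inl int_lt)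
    · exact (Std.Total.total p.frac q.frac).imp (.inr ⟨int_eq, ·⟩) (.inr ⟨int_eq.symm, ·⟩)
    · exact .inr (.inl int_lt)
  toDecidableLE := Classical.decRel _

instance [Nontrivial A] : IsOrderedAddMonoid (ChangGroup A) where
  add_le_add_left _ _ := ChangGroup.add_le_add_right

end Chain

end ChangGroup

/-- Bosbach's notion of a state, without the requirement that the values lie in the unit
interval: a real-valued function on a Wajsberg algebra that interprets `⊤`, `⊥` and the
untruncated implications as the standard algebra does. -/
structure IsSignedState {A : Type*} [WajsbergAlgebra A] (s : A → ℝ) : Prop where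
  map_top : s ⊤ = 1
  map_bot : s ⊥ = 0
  map_himp_of_le {x y : A} : y ≤ x → s (x ⇨ y) = 1 - s x + s y

namespace IsSignedState

variable {A : Type*} [WajsbergAlgebra A] {s : A → ℝ}

theorem map_compl (hs : IsSignedState s) (x : A) : s xᶜ = 1 - s x := by
  rw [← himp_bot, hs.map_himp_of_le bot_le, hs.map_bot, add_zero]

theorem map_himp [Std.Total (α := A) (· ≤ ·)] (hs : IsSignedState s) {S : Set A}
    (hmono : MonotoneOn s S) {x y : A} (hx : x ∈ S) (hy : y ∈ S) :
    s (x ⇨ y) = min 1 (1 - s x + s y) := by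
  rcases Std.Total.total (r := (· ≤ ·)) x y with hxy | hyx
  · have := hmono hx hy hxy
    rw [le_iff_himp_eq_top.1 hxy, hs.map_top, min_eq_left (by linarith)]
  · have := hmono hy hx hyx
    rw [hs.map_himp_of_le hyx, min_eq_right (by linarith)]

end IsSignedState

theorem exists_isSignedState_strictMonoOn {A : Type*} [WajsbergAlgebra A] [Nontrivial A]
    [Std.Total (α := A) (· ≤ ·)] {S : Set A} (hS : S.Finite) :
    ∃ s : A → ℝ, IsSignedState s ∧ StrictMonoOn s S := by
  have ofChain_top_pos : 0 < ChangGroup.ofChain (⊤ : A) :=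
    ChangGroup.ofChain_bot.symm.trans_lt (ChangGroup.ofChain_strictMono bot_lt_top)
  obtain ⟨h, hu, hmono⟩ :=
    exists_addMonoidHom_strictMonoOn ofChain_top_pos (hS.image ChangGroup.ofChain)
  refine ⟨h ∘ ChangGroup.ofChain, ⟨hu, ?_, fun {x y} hyx => ?_⟩,
    hmono.comp (ChangGroup.ofChain_strictMono.strictMonoOn S) (Set.mapsTo_image _ S)⟩
  · rw [Function.comp_apply, ChangGroup.ofChain_bot, map_zero]
  · have := congrArg h (ChangGroup.ofChain_himp_add hyx)
    rw [map_add, map_add, hu] at this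
    simp only [Function.comp_apply]
    linarith

end WajsbergAlgebra

namespace UQ

theorem coe_zero : ((0 : UQ) : ℚ) = 0 := rfl

theorem limp_zero (q : UQ) : q.limp 0 = q.lneg :=
  Subtype.ext <| by
    have := q.2.1
    simp only [limp, lneg, coe_zero, add_zero]
    exact min_eq_right (by linarith)

theorem limp_eq_one_of_le {q r : UQ} (h : q ≤ r) : q.limp r = 1 :=
  Subtype.ext <| min_eq_left <| by
    have : q.1 ≤ r.1 := h
    linarith

theorem lneg_limp {q r s : UQ} (h : (s : ℚ) = q + r) : q.lneg.limp r = s :=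
  Subtype.ext <| by
    have := s.2.2
    simp only [limp, lneg]
    rw [min_eq_right] <;> linarith

variable {f : UQ → ℝ}

theorem map_add_of_map_limp (map_zero : f 0 = 0)
    (map_limp : ∀ q r : UQ, r ≤ q → f (q.limp r) = 1 - f q + f r) {q r s : UQ}
    (h : (s : ℚ) = q + r) : f s = f q + f r := by
  have zero_le : 0 ≤ q := q.2.1
  have le_lneg : r ≤ q.lneg := by
    have : r.1 ≤ 1 - q.1 := by linarith [s.2.2]
    exact this
  rw [← lneg_limp h, map_limp _ _ le_lneg, ← limp_zero, map_limp _ _ zero_le, map_zero]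
  ring

theorem map_nsmul_of_map_add (map_add : ∀ {q r s : UQ}, (s : ℚ) = q + r → f s = f q + f r)
    {q s : UQ} (n : ℕ) (h : (s : ℚ) = n * q) : f s = n * f q := by
  induction n generalizing s with
  | zero =>
    have s_eq_zero : (s : ℚ) = 0 := by simpa using h
    have := map_add (q := s) (r := s) (s := s) (by simp [s_eq_zero])
    push_cast
    linarith
  | succ n ih =>
    push_cast at h
    have nq_mem : 0 ≤ n * (q : ℚ) ∧ n * (q : ℚ) ≤ 1 :=
      ⟨mul_nonneg n.cast_nonneg q.2.1, by linarith [s.2.2, q.2.1]⟩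
    rw [map_add (q := ⟨n * q, nq_mem⟩) (r := q) (by rw [h]; ring), ih rfl]
    push_cast
    ring

theorem eq_coe_of_map_add (map_one : f 1 = 1)
    (map_add : ∀ {q r s : UQ}, (s : ℚ) = q + r → f s = f q + f r) (q : UQ) :
    f q = (q : ℚ) := by
  have den_pos : (0 : ℚ) < (q : ℚ).den := Nat.cast_pos.2 (q : ℚ).den_pos
  let unit : UQ := ⟨1 / (q : ℚ).den, by positivity,
    (div_le_one den_pos).2 (Nat.one_le_cast.2 (q : ℚ).den_pos)⟩
  have q_eq : (q : ℚ) = (q : ℚ).num.toNat * (1 / (q : ℚ).den) := by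
    have num_eq : ((q : ℚ).num.toNat : ℚ) = (q : ℚ).num :=
      mod_cast Int.toNat_of_nonneg (Rat.num_nonneg.2 q.2.1)
    rw [num_eq, mul_one_div, Rat.num_div_den]
  have den_mul_map_unit : (q : ℚ).den * f unit = 1 :=
    (map_nsmul_of_map_add map_add _ (mul_one_div_cancel den_pos.ne').symm).symm.trans map_one
  calc f q = (q : ℚ).num.toNat * f unit := map_nsmul_of_map_add map_add _ q_eq
    _ = ((q : ℚ).num.toNat * (1 / (q : ℚ).den) : ℚ) := by
      rw [eq_one_div_of_mul_eq_one_right den_mul_map_unit]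
      push_cast
      rfl
    _ = (q : ℚ) := congrArg _ q_eq.symm

end UQ

/-- Provability in RPL from `T` as an inductive predicate; `rplProv_iff_derives` identifies it
with the existence of a proof. -/
inductive Derives (T : Set Fml) : Fml → Prop
  | ax {φ : Fml} : IsRPLAxiom φ → Derives T φ
  | hyp {φ : Fml} : φ ∈ T → Derives T φ
  | mp {φ ψ : Fml} : Derives T φ → Derives T (φ.imp ψ) → Derives T ψ

/-- The formula `φ` may follow the list `L` in a proof in RPL from `T`. -/
def IsRPLStep (T : Set Fml) (L : List Fml) (φ : Fml) : Prop :=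
  IsRPLAxiom φ ∨ φ ∈ T ∨ ∃ ψ ∈ L, ψ.imp φ ∈ L

section Proofs

variable {T : Set Fml} {L : List Fml} {φ : Fml}

theorem IsRPLStep.mono {M : List Fml} (hLM : L ⊆ M) (h : IsRPLStep T L φ) : IsRPLStep T M φ :=
  h.imp_right <| .imp_right fun ⟨ψ, hψ, hψφ⟩ => ⟨ψ, hLM hψ, hLM hψφ⟩

theorem IsRPLStep.derives (h : IsRPLStep T L φ) (hL : ∀ ψ ∈ L, Derives T ψ) : Derives T φ := by
  rcases h with h | h | ⟨ψ, hψ, hψφ⟩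
  · exact .ax h
  · exact .hyp h
  · exact .mp (hL ψ hψ) (hL _ hψφ)

theorem isRPLProofFrom_iff_forall_isRPLStep_take :
    IsRPLProofFrom T L ↔ ∀ i (hi : i < L.length), IsRPLStep T (L.take i) L[i] := by
  refine Fin.forall_iff.trans (forall₂_congr fun i hi => or_congr_right (or_congr_right ?_))
  simp only [List.mem_take_iff_getElem, List.get_eq_getElem]
  constructor
  · rintro ⟨j, k, hj, hk, h⟩
    exact ⟨L[j], ⟨j, lt_min hj j.2, rfl⟩, k, lt_min hk k.2, h⟩
  · rintro ⟨_, ⟨j, hj, rfl⟩, k, hk, h⟩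
    rw [lt_min_iff] at hj hk
    exact ⟨⟨j, hj.2⟩, ⟨k, hk.2⟩, hj.1, hk.1, h⟩

theorem isRPLProofFrom_nil : IsRPLProofFrom T [] := fun i => i.elim0

theorem isRPLProofFrom_concat :
    IsRPLProofFrom T (L ++ [φ]) ↔ IsRPLProofFrom T L ∧ IsRPLStep T L φ := by
  simp only [isRPLProofFrom_iff_forall_isRPLStep_take, List.length_append, List.length_singleton,
    Nat.forall_lt_succ_right']
  refine and_congr (forall₂_congr fun i hi => ?_) ?_
  · rw [List.take_append_of_le_length hi.le, List.getElem_append_left hi]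
  · rw [List.take_left, List.getElem_concat_length rfl]

theorem IsRPLProofFrom.append {M : List Fml} (hL : IsRPLProofFrom T L)
    (hM : IsRPLProofFrom T M) : IsRPLProofFrom T (L ++ M) := by
  induction M using List.reverseRecOn with
  | nil => rwa [List.append_nil]
  | append_singleton M φ ih =>
    rw [isRPLProofFrom_concat] at hM
    rw [← List.append_assoc, isRPLProofFrom_concat]
    exact ⟨ih hM.1, hM.2.mono (List.subset_append_right L M)⟩

theorem IsRPLProofFrom.derives (hL : IsRPLProofFrom T L) : ∀ φ ∈ L, Derives T φ := by
  induction L using List.reverseRecOn with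
  | nil => exact fun _ h => absurd h List.not_mem_nil
  | append_singleton L φ ih =>
    rw [isRPLProofFrom_concat] at hL
    exact List.forall_mem_append.2
      ⟨ih hL.1, List.forall_mem_singleton.2 (hL.2.derives (ih hL.1))⟩

theorem rplProv_iff_exists_concat :
    RPLProv T φ ↔ ∃ L, IsRPLProofFrom T L ∧ IsRPLStep T L φ := by
  simp only [RPLProv, List.getLast?_eq_some_iff, ← isRPLProofFrom_concat]
  aesop

theorem rplProv_iff_derives : RPLProv T φ ↔ Derives T φ := by
  rw [rplProv_iff_exists_concat]
  constructor
  · rintro ⟨L, hL, hφ⟩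
    exact hφ.derives hL.derives
  · intro h
    induction h with
    | ax h => exact ⟨[], isRPLProofFrom_nil, .inl h⟩
    | hyp h => exact ⟨[], isRPLProofFrom_nil, .inr (.inl h)⟩
    | @mp ψ φ _ _ ihψ ihψφ =>
      obtain ⟨L, hL, hψ⟩ := ihψ
      obtain ⟨M, hM, hψφ⟩ := ihψφ
      exact ⟨(L ++ [ψ]) ++ (M ++ [ψ.imp φ]),
        (isRPLProofFrom_concat.2 ⟨hL, hψ⟩).append (isRPLProofFrom_concat.2 ⟨hM, hψφ⟩),
        .inr (.inr ⟨ψ, by simp, by simp⟩)⟩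

end Proofs

section Soundness

variable {v : ℕ → ℝ}

theorem eval_mem_Icc (hv : IsAssignment v) (φ : Fml) : eval v φ ∈ Set.Icc (0 : ℝ) 1 := by
  induction φ with
  | var n => exact hv n
  | const q =>
    rw [eval]
    exact ⟨mod_cast q.2.1, mod_cast q.2.2⟩
  | neg φ ih => exact Set.Icc.mem_iff_one_sub_mem.1 ih
  | imp φ ψ ihφ ihψ =>
    exact ⟨le_min zero_le_one (by linarith [ihφ.2, ihψ.1] : 0 ≤ 1 - eval v φ + eval v ψ),
      min_le_left _ _⟩

theorem eval_imp_eq_one_iff {φ ψ : Fml} : eval v (φ.imp ψ) = 1 ↔ eval v φ ≤ eval v ψ := by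
  rw [eval, min_eq_left_iff]
  constructor <;> intro h <;> linarith

theorem eval_eqv_of_eq {φ ψ : Fml} (h : eval v φ = eval v ψ) : eval v (φ.eqv ψ) = 1 := by
  simp [Fml.eqv, Fml.conj, Fml.odot, eval, h]

theorem IsLukAxiom.eval_eq_one (hv : IsAssignment v) {φ : Fml} (h : IsLukAxiom φ) :
    eval v φ = 1 := by
  have mem := eval_mem_Icc hv
  cases h with
  | a1 φ ψ => have := mem φ; have := mem ψ; grind [eval]
  | a2 φ ψ χ => have := mem φ; have := mem ψ; have := mem χ; grind [eval]
  | a3 φ ψ => have := mem φ; have := mem ψ; grind [eval]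
  | a4 φ ψ => have := mem φ; have := mem ψ; grind [eval]

theorem IsRPLAxiom.eval_eq_one (hv : IsAssignment v) {φ : Fml} (h : IsRPLAxiom φ) :
    eval v φ = 1 := by
  cases h with
  | luk h => exact h.eval_eq_one hv
  | book_imp q r => exact eval_eqv_of_eq (by simp [eval, UQ.limp])
  | book_neg q => exact eval_eqv_of_eq (by simp [eval, UQ.lneg])
  | book_one => exact Rat.cast_one
  | book_zero => simp [eval, UQ.coe_zero]

theorem Derives.eval_eq_one (hv : IsAssignment v) {T : Set Fml}
    (hT : ∀ ψ ∈ T, eval v ψ = 1) {φ : Fml} (h : Derives T φ) : eval v φ = 1 := by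
  induction h with
  | ax h => exact h.eval_eq_one hv
  | hyp h => exact hT _ h
  | mp _ _ ihφ ihφψ =>
    exact (eval_mem_Icc hv _).2.antisymm (ihφ ▸ eval_imp_eq_one_iff.1 ihφψ)

end Soundness

namespace Derives

variable {T : Set Fml} {φ ψ χ : Fml}

theorem a1 (φ ψ : Fml) : Derives T (φ.imp (ψ.imp φ)) := .ax (.luk (.a1 φ ψ))

theorem a2 (φ ψ χ : Fml) : Derives T ((φ.imp ψ).imp ((ψ.imp χ).imp (φ.imp χ))) :=
  .ax (.luk (.a2 φ ψ χ))

theorem a3 (φ ψ : Fml) : Derives T (((φ.imp ψ).imp ψ).imp ((ψ.imp φ).imp φ)) :=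
  .ax (.luk (.a3 φ ψ))

theorem a4 (φ ψ : Fml) : Derives T ((φ.neg.imp ψ.neg).imp (ψ.imp φ)) := .ax (.luk (.a4 φ ψ))

theorem const_one : Derives T (.const 1) := .ax .book_one

theorem imp_of_right (φ : Fml) (h : Derives T ψ) : Derives T (φ.imp ψ) := .mp h (a1 ψ φ)

theorem imp_trans (h₁ : Derives T (φ.imp ψ)) (h₂ : Derives T (ψ.imp χ)) :
    Derives T (φ.imp χ) := .mp h₂ (.mp h₁ (a2 φ ψ χ))

theorem imp_imp_of_left (h : Derives T φ) (ψ : Fml) : Derives T ((φ.imp ψ).imp ψ) :=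
  .mp (h.imp_of_right _) (a3 ψ φ)

theorem imp_self (φ : Fml) : Derives T (φ.imp φ) :=
  (a1 φ (.const 1)).imp_trans (const_one.imp_imp_of_left φ)

theorem imp_imp_imp_right (h : Derives T (φ.imp ψ)) (χ : Fml) :
    Derives T ((ψ.imp χ).imp (φ.imp χ)) := .mp h (a2 φ ψ χ)

theorem imp_imp_imp_left (h : Derives T (φ.imp ψ)) (χ : Fml) :
    Derives T ((χ.imp φ).imp (χ.imp ψ)) := (a2 χ φ ψ).imp_trans (h.imp_imp_of_left _)

theorem neg_neg_imp (φ : Fml) : Derives T (φ.neg.neg.imp φ) :=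
  (a1 _ (Fml.const 1).neg.neg).imp_trans <|
    (a4 _ _).imp_trans <| (a4 _ _).imp_trans (const_one.imp_imp_of_left φ)

theorem imp_neg_neg (φ : Fml) : Derives T (φ.imp φ.neg.neg) := .mp (neg_neg_imp φ.neg) (a4 _ _)

theorem neg_imp_neg (h : Derives T (φ.imp ψ)) : Derives T (ψ.neg.imp φ.neg) :=
  .mp (((neg_neg_imp φ).imp_trans h).imp_trans (imp_neg_neg ψ)) (a4 _ _)

theorem mono {T' : Set Fml} (hT : T ⊆ T') (h : Derives T φ) : Derives T' φ := by
  induction h with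
  | ax h => exact .ax h
  | hyp h => exact .hyp (hT h)
  | mp _ _ ihφ ihφψ => exact .mp ihφ ihφψ

theorem exists_mem_of_sUnion {C : Set (Set Fml)} (hC : IsChain (· ⊆ ·) C) (hne : C.Nonempty)
    (h : Derives (⋃₀ C) φ) : ∃ T ∈ C, Derives T φ := by
  induction h with
  | ax h => exact ⟨_, hne.some_mem, .ax h⟩
  | hyp h =>
    obtain ⟨T, hT, h⟩ := h
    exact ⟨T, hT, .hyp h⟩
  | mp _ _ ihφ ihφψ =>
    obtain ⟨T₁, hT₁, hφ⟩ := ihφ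
    obtain ⟨T₂, hT₂, hφψ⟩ := ihφψ
    rcases hC.total hT₁ hT₂ with hsub | hsub
    · exact ⟨T₂, hT₂, .mp (hφ.mono hsub) hφψ⟩
    · exact ⟨T₁, hT₁, .mp hφ (hφψ.mono hsub)⟩

end Derives

/-- Prime theories, also called complete: those whose Lindenbaum algebra is a chain. -/
def IsPrimeTheory (T : Set Fml) : Prop :=
  ∀ φ ψ : Fml, Derives T (φ.imp ψ) ∨ Derives T (ψ.imp φ)

/-- Provable equivalence over `T`. -/
def Derives.setoid (T : Set Fml) : Setoid Fml where
  r φ ψ := Derives T (φ.imp ψ) ∧ Derives T (ψ.imp φ)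
  iseqv := ⟨fun φ => ⟨.imp_self φ, .imp_self φ⟩, And.symm,
    fun h₁ h₂ => ⟨h₁.1.imp_trans h₂.1, h₂.2.imp_trans h₁.2⟩⟩

/-- The Lindenbaum algebra of `T`: formulas modulo provable equivalence over `T`. -/
def LindenbaumAlgebra (T : Set Fml) : Type := Quotient (Derives.setoid T)

namespace LindenbaumAlgebra

open WajsbergAlgebra

variable {T : Set Fml} {φ ψ : Fml}

/-- The class of a formula in the Lindenbaum algebra. -/
def mk (T : Set Fml) (φ : Fml) : LindenbaumAlgebra T := Quotient.mk (Derives.setoid T) φ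

theorem mk_eq_mk : mk T φ = mk T ψ ↔ Derives T (φ.imp ψ) ∧ Derives T (ψ.imp φ) := Quotient.eq

theorem mk_eq_mk_const_one : mk T φ = mk T (.const 1) ↔ Derives T φ :=
  mk_eq_mk.trans
    ⟨fun h => .mp .const_one h.2, fun h => ⟨.imp_of_right _ .const_one, h.imp_of_right _⟩⟩

instance : WajsbergAlgebra (LindenbaumAlgebra T) where
  himp := Quotient.map₂ Fml.imp fun _ _ h₁ _ _ h₂ =>
    ⟨(h₁.2.imp_imp_imp_right _).imp_trans (h₂.1.imp_imp_imp_left _),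
      (h₁.1.imp_imp_imp_right _).imp_trans (h₂.2.imp_imp_imp_left _)⟩
  compl := Quotient.map Fml.neg fun _ _ h => ⟨h.2.neg_imp_neg, h.1.neg_imp_neg⟩
  top := mk T (.const 1)
  top_himp := Quotient.ind fun φ =>
    mk_eq_mk.2 ⟨Derives.const_one.imp_imp_of_left φ, .a1 φ _⟩
  himp_trans := Quotient.ind₂ fun φ ψ => Quotient.ind fun χ =>
    mk_eq_mk_const_one.2 (.a2 φ ψ χ)
  himp_himp_comm := Quotient.ind₂ fun φ ψ => mk_eq_mk.2 ⟨.a3 φ ψ, .a3 ψ φ⟩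
  compl_himp_compl_himp := Quotient.ind₂ fun φ ψ => mk_eq_mk_const_one.2 (.a4 φ ψ)

theorem mk_imp (φ ψ : Fml) : mk T (φ.imp ψ) = mk T φ ⇨ mk T ψ := rfl

theorem mk_neg (φ : Fml) : mk T φ.neg = (mk T φ)ᶜ := rfl

theorem mk_const_one : mk T (.const 1) = ⊤ := rfl

theorem mk_eq_top_iff : mk T φ = ⊤ ↔ Derives T φ := mk_eq_mk_const_one

theorem mk_le_mk_iff : mk T φ ≤ mk T ψ ↔ Derives T (φ.imp ψ) := mk_eq_top_iff

theorem mk_eq_mk_of_derives_eqv (h : Derives T (φ.eqv ψ)) : mk T φ = mk T ψ := by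
  have top_le : ⊤ ≤ (mk T φ ⇨ mk T ψ) ⊙ ((mk T φ ⇨ mk T ψ) ⇨ (mk T ψ ⇨ mk T φ)) :=
    (mk_eq_top_iff.2 h).ge
  exact le_antisymm (top_le_iff.1 (top_le.trans (otimes_le_left _ _)))
    (top_le_iff.1 (top_le.trans (otimes_himp_le _ _)))

theorem mk_const_limp (q r : UQ) : mk T (.const (q.limp r)) = mk T (.const q) ⇨ mk T (.const r) :=
  (mk_eq_mk_of_derives_eqv (.ax (.book_imp q r))).symm

theorem mk_const_zero : mk T (.const 0) = ⊥ :=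
  compl_injective <| (mk_eq_top_iff.2 (.ax .book_zero)).trans compl_bot.symm

theorem monotone_mk_const : Monotone fun q => mk T (.const q) := fun q r hqr => by
  rw [le_iff_himp_eq_top, ← mk_const_limp, UQ.limp_eq_one_of_le hqr, mk_const_one]

/-- `y` plays the role of a disjunct added to every line of a proof. -/
theorem sup_mk_eq_top_of_derives_insert {y : LindenbaumAlgebra T} (hy : y ⊔ mk T φ = ⊤)
    (h : Derives (insert φ T) ψ) : y ⊔ mk T ψ = ⊤ := by
  have of_derives {χ : Fml} (hχ : Derives T χ) : y ⊔ mk T χ = ⊤ := by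
    rw [mk_eq_top_iff.2 hχ, sup_top_eq]
  induction h with
  | ax h => exact of_derives (.ax h)
  | hyp h =>
    rcases h with rfl | h
    · exact hy
    · exact of_derives (.hyp h)
  | mp _ _ ihφ ihφψ => exact sup_eq_top_of_sup_himp_eq_top ihφ ihφψ

theorem derives_of_derives_insert_imp {χ : Fml} (h₁ : Derives (insert (φ.imp ψ) T) χ)
    (h₂ : Derives (insert (ψ.imp φ) T) χ) : Derives T χ := by
  have sup_eq_top : mk T (ψ.imp φ) ⊔ mk T χ = ⊤ :=
    sup_mk_eq_top_of_derives_insert (himp_sup_himp (mk T ψ) (mk T φ)) h₁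
  rw [sup_comm] at sup_eq_top
  rw [← mk_eq_top_iff, ← sup_idem (mk T χ)]
  exact sup_mk_eq_top_of_derives_insert sup_eq_top h₂

theorem nontrivial_of_not_derives (h : ¬ Derives T φ) : Nontrivial (LindenbaumAlgebra T) :=
  ⟨mk T φ, ⊤, fun hφ => h (mk_eq_top_iff.1 hφ)⟩

theorem total_of_isPrimeTheory (h : IsPrimeTheory T) :
    Std.Total (α := LindenbaumAlgebra T) (· ≤ ·) :=
  ⟨Quotient.ind₂ fun φ ψ => (h φ ψ).imp mk_le_mk_iff.2 mk_le_mk_iff.2⟩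

theorem map_mk_const {s : LindenbaumAlgebra T → ℝ} (hs : IsSignedState s) (q : UQ) :
    s (mk T (.const q)) = (q : ℚ) := by
  let f : UQ → ℝ := fun q => s (mk T (.const q))
  refine UQ.eq_coe_of_map_add (f := f) hs.map_top
    (UQ.map_add_of_map_limp (f := f) ?_ fun q r hrq => ?_) q
  · simp only [f, mk_const_zero, hs.map_bot]
  · simp only [f, mk_const_limp, hs.map_himp_of_le (monotone_mk_const hrq)]

end LindenbaumAlgebra

theorem exists_isPrimeTheory_superset {Γ : Set Fml} {φ : Fml} (h : ¬ Derives Γ φ) :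
    ∃ T, Γ ⊆ T ∧ ¬ Derives T φ ∧ IsPrimeTheory T := by
  obtain ⟨T, hΓT, hT⟩ := zorn_subset_nonempty {T | ¬ Derives T φ}
    (fun C hCφ hC hne => ⟨⋃₀ C, fun hφ => by
      obtain ⟨T, hT, hTφ⟩ := hφ.exists_mem_of_sUnion hC hne
      exact hCφ hT hTφ, fun _ => Set.subset_sUnion_of_mem⟩) Γ h
  have derives_insert {ψ : Fml} (hψ : ¬ Derives T ψ) : Derives (insert ψ T) φ := by
    by_contra hφ
    exact hψ (.hyp (hT.le_of_ge hφ (Set.subset_insert ψ T) (Set.mem_insert ψ T)))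
  refine ⟨T, hΓT, hT.prop, fun ψ χ => ?_⟩
  by_contra! hψχ
  exact hT.prop <| LindenbaumAlgebra.derives_of_derives_insert_imp
    (derives_insert hψχ.1) (derives_insert hψχ.2)

/-- The set of subformulas of a formula, including the formula itself. -/
def Fml.subformulas : Fml → Set Fml
  | .var n => {.var n}
  | .const q => {.const q}
  | .neg φ => insert φ.neg φ.subformulas
  | .imp φ ψ => insert (φ.imp ψ) (φ.subformulas ∪ ψ.subformulas)

theorem Fml.finite_subformulas (φ : Fml) : φ.subformulas.Finite := by
  induction φ with
  | var n => exact Set.finite_singleton _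
  | const q => exact Set.finite_singleton _
  | neg φ ih => exact ih.insert _
  | imp φ ψ ihφ ihψ => exact (ihφ.union ihψ).insert _

theorem Fml.self_mem_subformulas (φ : Fml) : φ ∈ φ.subformulas := by
  cases φ <;> simp [Fml.subformulas]

section Countermodel

open LindenbaumAlgebra WajsbergAlgebra

variable {T : Set Fml}

theorem eval_eq_of_isSignedState [Std.Total (α := LindenbaumAlgebra T) (· ≤ ·)]
    {s : LindenbaumAlgebra T → ℝ} (hs : IsSignedState s) {S : Set Fml}
    (hmono : MonotoneOn s (mk T '' S)) {v : ℕ → ℝ}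
    (hv : ∀ n, .var n ∈ S → v n = s (mk T (.var n))) {φ : Fml} (hφ : φ.subformulas ⊆ S) :
    eval v φ = s (mk T φ) := by
  induction φ with
  | var n => exact hv n (hφ (Fml.self_mem_subformulas _))
  | const q => exact (map_mk_const hs q).symm
  | neg φ ih =>
    rw [eval, ih ((Set.subset_insert _ _).trans hφ), mk_neg, hs.map_compl]
  | imp φ ψ ihφ ihψ =>
    obtain ⟨hφS, hψS⟩ := Set.union_subset_iff.1 ((Set.subset_insert _ _).trans hφ)
    rw [eval, ihφ hφS, ihψ hψS, mk_imp, hs.map_himp hmono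
      (Set.mem_image_of_mem _ (hφS φ.self_mem_subformulas))
      (Set.mem_image_of_mem _ (hψS ψ.self_mem_subformulas))]

theorem exists_countermodel {Γ : Set Fml} (hΓ : Γ.Finite) {φ : Fml} (h : ¬ Derives Γ φ) :
    ∃ v, IsAssignment v ∧ (∀ ψ ∈ Γ, eval v ψ = 1) ∧ eval v φ ≠ 1 := by
  obtain ⟨T, hΓT, hTφ, hT⟩ := exists_isPrimeTheory_superset h
  have := nontrivial_of_not_derives hTφ
  have := total_of_isPrimeTheory hT
  let S : Set Fml := ⋃ ψ ∈ insert φ Γ, ψ.subformulas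
  have hS : S.Finite := (hΓ.insert φ).biUnion fun ψ _ => ψ.finite_subformulas
  obtain ⟨s, hs, hmono⟩ :=
    exists_isSignedState_strictMonoOn (((hS.image (mk T)).insert ⊤).insert ⊥)
  have mk_mem {ψ : Fml} (hψ : ψ ∈ S) : mk T ψ ∈ insert ⊥ (insert ⊤ (mk T '' S)) :=
    .inr (.inr (Set.mem_image_of_mem _ hψ))
  have s_mem_Icc {ψ : Fml} (hψ : ψ ∈ S) : s (mk T ψ) ∈ Set.Icc (0 : ℝ) 1 :=
    ⟨hs.map_bot.symm.trans_le (hmono.monotoneOn (.inl rfl) (mk_mem hψ) bot_le),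
      (hmono.monotoneOn (mk_mem hψ) (.inr (.inl rfl)) le_top).trans_eq hs.map_top⟩
  let v : ℕ → ℝ := fun n => Set.projIcc 0 1 zero_le_one (s (mk T (.var n)))
  have eval_eq {ψ : Fml} (hψ : ψ ∈ insert φ Γ) : eval v ψ = s (mk T ψ) := by
    refine eval_eq_of_isSignedState hs (S := S) (hmono.monotoneOn.mono ?_) (fun n hn => ?_)
      (Set.subset_biUnion_of_mem hψ)
    · exact (Set.subset_insert _ _).trans (Set.subset_insert _ _)
    · exact congrArg Subtype.val (Set.projIcc_of_mem zero_le_one (s_mem_Icc hn))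
  refine ⟨v, fun n => Subtype.coe_prop _, fun ψ hψ => ?_, ?_⟩
  · rw [eval_eq (.inr hψ), mk_eq_top_iff.2 (.hyp (hΓT hψ)), hs.map_top]
  · have mk_lt_top : mk T φ < ⊤ := lt_top_iff_ne_top.2 fun hφ => hTφ (mk_eq_top_iff.1 hφ)
    have φ_mem : φ ∈ S := Set.mem_biUnion (Set.mem_insert φ Γ) φ.self_mem_subformulas
    rw [eval_eq (.inl rfl), ← hs.map_top]
    exact (hmono (mk_mem φ_mem) (.inr (.inl rfl)) mk_lt_top).ne

end Countermodel

/-- finite strong standard completeness for RPL: for a finite set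
`Γ ∪ {φ}` of formulas of the language of RPL, `Γ ⊢_RPL φ` iff every assignment into
`[0,1]_Ł` (constants interpreted canonically) making all of `Γ` true makes `φ` true. -/
theorem rpl_finite_strong_standard_completeness (Γ : Set Fml) (φ : Fml)
    (hfin : Γ.Finite) :
    RPLProv Γ φ ↔
      ∀ v : ℕ → ℝ, IsAssignment v → (∀ ψ ∈ Γ, eval v ψ = 1) → eval v φ = 1 := by
  rw [rplProv_iff_derives]
  constructor
  · exact fun h v hv hΓ => h.eval_eq_one hv hΓ
  · intro hvalid
    by_contra h
    obtain ⟨v, hv, hΓ, hφ⟩ := exists_countermodel hfin h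
    exact hφ (hvalid v hv hΓ)
end
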